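/- Let α ∈ (1,∞). Let ρ₁, ρ₂ be positive semidefinite complex matrices and σ₁, σ₂ positive definite complex matrices, with ρ₁, σ₁ of size n₁ and ρ₂, σ₂ of size n₂. Then Q^#_α(ρ₁ ⊕ ρ₂ ‖ σ₁ ⊕ σ₂) = Q^#_α(ρ₁‖σ₁) + Q^#_α(ρ₂‖σ₂), where ⊕ denotes the block-diagonal direct sum of matrices (the (n₁+n₂)×(n₁+n₂) matrix with blocks ρ₁, ρ₂ on the diagonal and zero off-diagonal blocks). -/

import Mathlib

open Matrix Filter
open scoped Kronecker Classical ComplexOrder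

noncomputable def Matrix.rpowH {n : Type*} [Fintype n] [DecidableEq n]
    (A : Matrix n n ℂ) (r : ℝ) : Matrix n n ℂ :=
  if hA : A.IsHermitian then
    (hA.eigenvectorUnitary : Matrix n n ℂ) *
      Matrix.diagonal (fun i => ((hA.eigenvalues i ^ r : ℝ) : ℂ)) *
      star (hA.eigenvectorUnitary : Matrix n n ℂ)
  else 0

noncomputable def Matrix.gmean {n : Type*} [Fintype n] [DecidableEq n]
    (β : ℝ) (S A : Matrix n n ℂ) : Matrix n n ℂ :=
  S.rpowH (1/2) * ((S.rpowH (-(1/2)) * A * S.rpowH (-(1/2))).rpowH β) * S.rpowH (1/2)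

noncomputable def QSharp {n : Type*} [Fintype n] [DecidableEq n]
    (α : ℝ) (ρ σ : Matrix n n ℂ) : ℝ :=
  sInf { t : ℝ | ∃ A : Matrix n n ℂ, A.PosSemidef ∧
    (Matrix.gmean (1/α) σ A - ρ).PosSemidef ∧ t = A.trace.re }

noncomputable def DSharp {n : Type*} [Fintype n] [DecidableEq n]
    (α : ℝ) (ρ σ : Matrix n n ℂ) : ℝ :=
  1/(α-1) * Real.logb 2 (QSharp α ρ σ)

noncomputable def opNorm {n : Type*} [Fintype n] [DecidableEq n] (A : Matrix n n ℂ) : ℝ :=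
  ‖(Matrix.toEuclideanCLM (𝕜 := ℂ) A : EuclideanSpace ℂ n →L[ℂ] EuclideanSpace ℂ n)‖

noncomputable def Dtilde {n : Type*} [Fintype n] [DecidableEq n]
    (α : ℝ) (ρ σ : Matrix n n ℂ) : ℝ :=
  1/(α-1) * Real.logb 2
    (((σ.rpowH ((1-α)/(2*α)) * ρ * σ.rpowH ((1-α)/(2*α))).rpowH α).trace.re)

noncomputable def Dhat {n : Type*} [Fintype n] [DecidableEq n]
    (α : ℝ) (ρ σ : Matrix n n ℂ) : ℝ :=
  1/(α-1) * Real.logb 2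
    ((σ.rpowH (1/2) * ((σ.rpowH (-(1/2)) * ρ * σ.rpowH (-(1/2))).rpowH α) * σ.rpowH (1/2)).trace.re)

section helpers
open scoped MatrixOrder Matrix.Norms.L2Operator

lemma rpowH_eq_rpow {n : Type*} [Fintype n] [DecidableEq n]
    {A : Matrix n n ℂ} (hA : A.PosSemidef) (r : ℝ) : A.rpowH r = A ^ r := by
  have h0 : 0 ≤ A := hA.nonneg
  rw [CFC.rpow_eq_cfc_real h0, hA.1.cfc_eq]
  unfold Matrix.rpowH
  rw [dif_pos hA.1]
  rfl

def blockHom (n m : Type*) [Fintype n] [DecidableEq n] [Fintype m] [DecidableEq m] :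
    (Matrix n n ℂ × Matrix m m ℂ) →⋆ₐ[ℝ] Matrix (n ⊕ m) (n ⊕ m) ℂ where
  toFun p := Matrix.fromBlocks p.1 0 0 p.2
  map_one' := by simp
  map_mul' := by intro x y; simp [Matrix.fromBlocks_multiply]
  map_zero' := by simp
  map_add' := by intro x y; simp [Matrix.fromBlocks_add]
  commutes' := by
    intro r
    simp only [Algebra.algebraMap_eq_smul_one]
    simp only [Prod.smul_fst, Prod.smul_snd, Prod.fst_one, Prod.snd_one, ← Matrix.fromBlocks_one,
      Matrix.fromBlocks_smul, smul_zero]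
  map_star' := by
    intro x; simp [Matrix.star_eq_conjTranspose, Matrix.fromBlocks_conjTranspose]

lemma rpow_fromBlocks {n m : Type*} [Fintype n] [DecidableEq n] [Fintype m] [DecidableEq m]
    {A : Matrix n n ℂ} {B : Matrix m m ℂ} (hA : A.PosSemidef) (hB : B.PosSemidef)
    (hAB : (Matrix.fromBlocks A 0 0 B).PosSemidef) (r : ℝ) :
    (Matrix.fromBlocks A 0 0 B) ^ r = Matrix.fromBlocks (A ^ r) 0 0 (B ^ r) := by
  rw [CFC.rpow_eq_cfc_real hA.nonneg, CFC.rpow_eq_cfc_real hB.nonneg,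
    CFC.rpow_eq_cfc_real hAB.nonneg]
  have hfin : (spectrum ℝ A ∪ spectrum ℝ B ∪
      spectrum ℝ (Matrix.fromBlocks A 0 0 B)).Finite := by
    rw [hA.1.spectrum_real_eq_range_eigenvalues, hB.1.spectrum_real_eq_range_eigenvalues,
      hAB.1.spectrum_real_eq_range_eigenvalues]
    exact ((Set.finite_range _).union (Set.finite_range _)).union (Set.finite_range _)
  obtain ⟨p, hp⟩ : ∃ p : Polynomial ℝ, ∀ x ∈ hfin.toFinset, x ^ r = p.eval x :=
    ⟨Lagrange.interpolate hfin.toFinset id (fun x => x ^ r), fun x hx =>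
      (Lagrange.eval_interpolate_at_node (fun x : ℝ => x ^ r)
        (Function.injective_id.injOn) hx).symm⟩
  simp only [Set.Finite.mem_toFinset] at hp
  have h1 : cfc (fun x : ℝ => x ^ r) A = Polynomial.aeval A p := by
    rw [← cfc_polynomial p A hA.1]
    exact cfc_congr fun x hx => hp x (Or.inl (Or.inl hx))
  have h2 : cfc (fun x : ℝ => x ^ r) B = Polynomial.aeval B p := by
    rw [← cfc_polynomial p B hB.1]
    exact cfc_congr fun x hx => hp x (Or.inl (Or.inr hx))
  have h3 : cfc (fun x : ℝ => x ^ r) (Matrix.fromBlocks A 0 0 B) =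
      Polynomial.aeval (Matrix.fromBlocks A 0 0 B) p := by
    rw [← cfc_polynomial p _ hAB.1]
    exact cfc_congr fun x hx => hp x (Or.inr hx)
  rw [h1, h2, h3]
  have h4 := Polynomial.aeval_algHom_apply (blockHom n m).toAlgHom (A, B) p
  have h5 := Polynomial.aeval_algHom_apply (AlgHom.fst ℝ (Matrix n n ℂ) (Matrix m m ℂ)) (A, B) p
  have h6 := Polynomial.aeval_algHom_apply (AlgHom.snd ℝ (Matrix n n ℂ) (Matrix m m ℂ)) (A, B) p
  simp only [AlgHom.fst_apply, AlgHom.snd_apply] at h5 h6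
  rw [h5, h6]
  exact h4

def conjHom {n : Type*} [Fintype n] [DecidableEq n] (U : Matrix n n ℂ) (hU : U * U = 1)
    (hs : star U = U) : Matrix n n ℂ →⋆ₐ[ℝ] Matrix n n ℂ where
  toFun p := U * p * U
  map_one' := by simp [hU]
  map_mul' := by
    intro x y
    calc U * (x * y) * U = U * x * 1 * y * U := by simp [mul_assoc]
      _ = U * x * (U * U) * y * U := by rw [hU]
      _ = _ := by simp only [mul_assoc]
  map_zero' := by simp
  map_add' := by intro x y; simp [mul_add, add_mul]
  commutes' := by
    intro r
    simp only [Algebra.algebraMap_eq_smul_one]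
    simp [hU]
  map_star' := by
    intro x; simp [hs, mul_assoc]

lemma rpow_conj {n : Type*} [Fintype n] [DecidableEq n] (U : Matrix n n ℂ) (hU : U * U = 1)
    (hs : star U = U) {B : Matrix n n ℂ} (hB : B.PosSemidef) (hB' : (U * B * U).PosSemidef)
    (r : ℝ) : (U * B * U) ^ r = U * B ^ r * U := by
  rw [CFC.rpow_eq_cfc_real hB.nonneg, CFC.rpow_eq_cfc_real hB'.nonneg]
  have hfin : (spectrum ℝ B).Finite := by
    rw [hB.1.spectrum_real_eq_range_eigenvalues]
    exact Set.finite_range _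
  have hcont : Continuous (conjHom U hU hs) := by
    change Continuous fun p : Matrix n n ℂ => U * p * U
    fun_prop
  exact (StarAlgHom.map_cfc (S := ℝ) (conjHom U hU hs) (fun x : ℝ => x ^ r) B
    (hfin.continuousOn _) hcont hB.1 hB'.1).symm

lemma posSemidef_rpow {n : Type*} [Fintype n] [DecidableEq n] (A : Matrix n n ℂ) (r : ℝ) :
    (A ^ r).PosSemidef := Matrix.nonneg_iff_posSemidef.1 CFC.rpow_nonneg

lemma posSemidef_blocks {n m : Type*} [Fintype n] [DecidableEq n] [Fintype m] [DecidableEq m]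
    {A : Matrix n n ℂ} {B : Matrix m m ℂ} (hA : A.PosSemidef) (hB : B.PosSemidef) :
    (Matrix.fromBlocks A 0 0 B).PosSemidef := by
  obtain ⟨X, rfl⟩ := CStarAlgebra.nonneg_iff_eq_star_mul_self.1 hA.nonneg
  obtain ⟨Y, rfl⟩ := CStarAlgebra.nonneg_iff_eq_star_mul_self.1 hB.nonneg
  have := Matrix.posSemidef_conjTranspose_mul_self (Matrix.fromBlocks X 0 0 Y)
  simpa [Matrix.fromBlocks_conjTranspose, Matrix.fromBlocks_multiply,
    Matrix.star_eq_conjTranspose] using this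

lemma toBlocks11_psd {n m : Type*} {B : Matrix (n ⊕ m) (n ⊕ m) ℂ} (hB : B.PosSemidef) :
    B.toBlocks₁₁.PosSemidef := hB.submatrix Sum.inl

lemma toBlocks22_psd {n m : Type*} {B : Matrix (n ⊕ m) (n ⊕ m) ℂ} (hB : B.PosSemidef) :
    B.toBlocks₂₂.PosSemidef := hB.submatrix Sum.inr

lemma pinch_rpow {n m : Type*} [Fintype n] [DecidableEq n] [Fintype m] [DecidableEq m]
    {B : Matrix (n ⊕ m) (n ⊕ m) ℂ} (hB : B.PosSemidef) {β : ℝ} (hβ : β ∈ Set.Icc (0 : ℝ) 1) :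
    (B.toBlocks₁₁ ^ β - (B ^ β).toBlocks₁₁).PosSemidef ∧
    (B.toBlocks₂₂ ^ β - (B ^ β).toBlocks₂₂).PosSemidef := by
  set U : Matrix (n ⊕ m) (n ⊕ m) ℂ := Matrix.fromBlocks 1 0 0 (-1) with hUdef
  have hU : U * U = 1 := by simp [hUdef, Matrix.fromBlocks_multiply]
  have hs : star U = U := by
    simp [hUdef, Matrix.star_eq_conjTranspose, Matrix.fromBlocks_conjTranspose]
  have hB' : (U * B * U).PosSemidef := by
    have := hB.mul_mul_conjTranspose_same U
    rwa [← Matrix.star_eq_conjTranspose, hs] at this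
  have key : ∀ C : Matrix (n ⊕ m) (n ⊕ m) ℂ, (1/2 : ℝ) • C + (1/2 : ℝ) • (U * C * U) =
      Matrix.fromBlocks C.toBlocks₁₁ 0 0 C.toBlocks₂₂ := by
    intro C
    conv_lhs => rw [← Matrix.fromBlocks_toBlocks C]
    simp only [hUdef, Matrix.fromBlocks_multiply, Matrix.fromBlocks_smul, Matrix.fromBlocks_add]
    congr 1 <;> simp <;> rw [← add_smul] <;> norm_num
  have h := (CFC.concaveOn_rpow (A := Matrix (n ⊕ m) (n ⊕ m) ℂ) hβ).2
    (Set.mem_Ici.2 hB.nonneg) (Set.mem_Ici.2 hB'.nonneg)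
    (show (0 : ℝ) ≤ 1/2 by norm_num) (show (0 : ℝ) ≤ 1/2 by norm_num) (by norm_num)
  simp only [rpow_conj U hU hs hB hB', key] at h
  rw [rpow_fromBlocks (toBlocks11_psd hB) (toBlocks22_psd hB)
    (posSemidef_blocks (toBlocks11_psd hB) (toBlocks22_psd hB)), Matrix.le_iff] at h
  exact ⟨toBlocks11_psd h, toBlocks22_psd h⟩

lemma conj_rpow_psd {n : Type*} [Fintype n] [DecidableEq n] (S : Matrix n n ℂ) (r : ℝ)
    {A : Matrix n n ℂ} (hA : A.PosSemidef) : (S ^ r * A * S ^ r).PosSemidef := by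
  have := hA.mul_mul_conjTranspose_same (S ^ r)
  rwa [(posSemidef_rpow S r).1] at this

lemma gmean_eq {n : Type*} [Fintype n] [DecidableEq n] {S A : Matrix n n ℂ} (β : ℝ)
    (hS : S.PosDef) (hA : A.PosSemidef) : Matrix.gmean β S A =
      S ^ (1/2 : ℝ) * (S ^ (-(1/2) : ℝ) * A * S ^ (-(1/2) : ℝ)) ^ β * S ^ (1/2 : ℝ) := by
  unfold Matrix.gmean
  rw [rpowH_eq_rpow hS.posSemidef, rpowH_eq_rpow hS.posSemidef,
    rpowH_eq_rpow (conj_rpow_psd _ _ hA)]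

lemma feasible {n : Type*} [Fintype n] [DecidableEq n] {α : ℝ} (hα : 1 < α)
    {ρ σ : Matrix n n ℂ} (hρ : ρ.PosSemidef) (hσ : σ.PosDef) :
    ∃ A : Matrix n n ℂ, A.PosSemidef ∧ (Matrix.gmean (1/α) σ A - ρ).PosSemidef := by
  have hs : IsStrictlyPositive σ := Matrix.isStrictlyPositive_iff_posDef.2 hσ
  have h1 := CFC.rpow_mul_rpow_neg (1/2) hs
  have h2 := CFC.rpow_neg_mul_rpow (1/2) hs
  have hX := conj_rpow_psd σ (-(1/2)) hρ
  set P := σ ^ (1/2 : ℝ) with hP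
  set N := σ ^ (-(1/2) : ℝ) with hN
  have cancel : ∀ (P N Y : Matrix n n ℂ), P * N = 1 → N * P = 1 → N * (P * Y * P) * N = Y := by
    intro P N Y hPN hNP
    calc N * (P * Y * P) * N = (N * P) * Y * (P * N) := by simp only [mul_assoc]
      _ = Y := by rw [hPN, hNP]; simp
  refine ⟨P * (N * ρ * N) ^ α * P, conj_rpow_psd _ _ (posSemidef_rpow _ _), ?_⟩
  rw [gmean_eq _ hσ (conj_rpow_psd _ _ (posSemidef_rpow _ _)), ← hP, ← hN, cancel P N _ h1 h2,
    CFC.rpow_rpow_of_exponent_nonneg _ _ _ (by linarith) (by positivity) hX.nonneg,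
    mul_one_div_cancel (by linarith), CFC.rpow_one _ hX.nonneg, cancel N P _ h2 h1, sub_self]
  exact Matrix.PosSemidef.zero

lemma gmean_blocks {n m : Type*} [Fintype n] [DecidableEq n] [Fintype m] [DecidableEq m] (β : ℝ)
    {S A : Matrix n n ℂ} {T B : Matrix m m ℂ} (hS : S.PosDef) (hT : T.PosDef)
    (hST : (Matrix.fromBlocks S 0 0 T).PosDef) (hA : A.PosSemidef) (hB : B.PosSemidef) :
    Matrix.gmean β (Matrix.fromBlocks S 0 0 T) (Matrix.fromBlocks A 0 0 B) =
      Matrix.fromBlocks (Matrix.gmean β S A) 0 0 (Matrix.gmean β T B) := by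
  have e := rpow_fromBlocks hS.posSemidef hT.posSemidef hST.posSemidef
  have hA' := conj_rpow_psd S (-(1/2)) hA
  have hB' := conj_rpow_psd T (-(1/2)) hB
  rw [gmean_eq _ hS hA, gmean_eq _ hT hB, gmean_eq _ hST (posSemidef_blocks hA hB), e, e]
  simp only [Matrix.fromBlocks_multiply, Matrix.mul_zero, Matrix.zero_mul, add_zero, zero_add]
  rw [rpow_fromBlocks hA' hB' (posSemidef_blocks hA' hB')]
  simp only [Matrix.fromBlocks_multiply, Matrix.mul_zero, Matrix.zero_mul, add_zero, zero_add]

lemma diag_conj {n m : Type*} [Fintype n] [Fintype m]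
    (P : Matrix n n ℂ) (Q : Matrix m m ℂ) (A : Matrix (n ⊕ m) (n ⊕ m) ℂ) :
    (Matrix.fromBlocks P 0 0 Q * A * Matrix.fromBlocks P 0 0 Q).toBlocks₁₁
      = P * A.toBlocks₁₁ * P ∧
    (Matrix.fromBlocks P 0 0 Q * A * Matrix.fromBlocks P 0 0 Q).toBlocks₂₂
      = Q * A.toBlocks₂₂ * Q := by
  rw [← Matrix.fromBlocks_toBlocks A]
  simp [Matrix.fromBlocks_multiply]

lemma gmean_pinch {n m : Type*} [Fintype n] [DecidableEq n] [Fintype m] [DecidableEq m] {β : ℝ}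
    (hβ : β ∈ Set.Icc (0 : ℝ) 1)
    {S : Matrix n n ℂ} {T : Matrix m m ℂ} (hS : S.PosDef) (hT : T.PosDef)
    (hST : (Matrix.fromBlocks S 0 0 T).PosDef) {A : Matrix (n ⊕ m) (n ⊕ m) ℂ}
    (hA : A.PosSemidef) :
    (Matrix.gmean β S A.toBlocks₁₁ -
      (Matrix.gmean β (Matrix.fromBlocks S 0 0 T) A).toBlocks₁₁).PosSemidef ∧
    (Matrix.gmean β T A.toBlocks₂₂ -
      (Matrix.gmean β (Matrix.fromBlocks S 0 0 T) A).toBlocks₂₂).PosSemidef := by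
  have e := rpow_fromBlocks hS.posSemidef hT.posSemidef hST.posSemidef
  rw [gmean_eq _ hS (toBlocks11_psd hA), gmean_eq _ hT (toBlocks22_psd hA), gmean_eq _ hST hA]
  have hX := conj_rpow_psd (Matrix.fromBlocks S 0 0 T) (-(1/2)) hA
  have hp := pinch_rpow hX hβ
  rw [e] at hp ⊢
  rw [e, (diag_conj _ _ _).1, (diag_conj _ _ _).2]
  rw [(diag_conj _ _ _).1, (diag_conj _ _ _).2] at hp
  rw [← Matrix.sub_mul, ← Matrix.mul_sub, ← Matrix.sub_mul, ← Matrix.mul_sub]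
  exact ⟨conj_rpow_psd _ _ hp.1, conj_rpow_psd _ _ hp.2⟩

lemma blocks_posDef {n m : Type*} [Fintype n] [DecidableEq n] [Fintype m] [DecidableEq m]
    {S : Matrix n n ℂ} {T : Matrix m m ℂ} (hS : S.PosDef) (hT : T.PosDef) :
    (Matrix.fromBlocks S 0 0 T).PosDef := by
  rw [(posSemidef_blocks hS.posSemidef hT.posSemidef).posDef_iff_isUnit]
  exact Matrix.isUnit_fromBlocks_zero₂₁.2 ⟨hS.isUnit, hT.isUnit⟩

lemma bddBelow_set {n : Type*} [Fintype n] [DecidableEq n] (α : ℝ) (ρ σ : Matrix n n ℂ) :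
    BddBelow { t : ℝ | ∃ A : Matrix n n ℂ, A.PosSemidef ∧
      (Matrix.gmean (1/α) σ A - ρ).PosSemidef ∧ t = A.trace.re } := by
  refine ⟨0, ?_⟩
  rintro t ⟨A, hA, -, rfl⟩
  exact (Complex.le_def.1 hA.trace_nonneg).1

end helpers

/-- block additivity of Q^#_α under direct sums. -/
theorem QSharp_blockDiagonal_additive
    {n₁ n₂ : Type*} [Fintype n₁] [DecidableEq n₁] [Fintype n₂] [DecidableEq n₂]
    (α : ℝ) (hα : 1 < α)
    (ρ₁ : Matrix n₁ n₁ ℂ) (ρ₂ : Matrix n₂ n₂ ℂ)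
    (σ₁ : Matrix n₁ n₁ ℂ) (σ₂ : Matrix n₂ n₂ ℂ)
    (hρ₁ : ρ₁.PosSemidef) (hρ₂ : ρ₂.PosSemidef)
    (hσ₁ : σ₁.PosDef) (hσ₂ : σ₂.PosDef) :
    QSharp α (Matrix.fromBlocks ρ₁ 0 0 ρ₂) (Matrix.fromBlocks σ₁ 0 0 σ₂)
      = QSharp α ρ₁ σ₁ + QSharp α ρ₂ σ₂ := by
  have hST := blocks_posDef hσ₁ hσ₂
  have hβ : 1 / α ∈ Set.Icc (0 : ℝ) 1 :=
    ⟨by positivity, (div_le_one (by linarith)).2 hα.le⟩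
  have ne₁ : { t : ℝ | ∃ A : Matrix n₁ n₁ ℂ, A.PosSemidef ∧
      (Matrix.gmean (1/α) σ₁ A - ρ₁).PosSemidef ∧ t = A.trace.re }.Nonempty := by
    obtain ⟨A, h, h'⟩ := feasible hα hρ₁ hσ₁
    exact ⟨_, A, h, h', rfl⟩
  have ne₂ : { t : ℝ | ∃ A : Matrix n₂ n₂ ℂ, A.PosSemidef ∧
      (Matrix.gmean (1/α) σ₂ A - ρ₂).PosSemidef ∧ t = A.trace.re }.Nonempty := by
    obtain ⟨A, h, h'⟩ := feasible hα hρ₂ hσ₂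
    exact ⟨_, A, h, h', rfl⟩
  unfold QSharp
  rw [← csInf_add ne₁ (bddBelow_set _ _ _) ne₂ (bddBelow_set _ _ _)]
  apply le_antisymm
  · refine le_csInf (ne₁.add ne₂) ?_
    rintro _ ⟨_, ⟨A, hA, hA', rfl⟩, _, ⟨B, hB, hB', rfl⟩, rfl⟩
    refine csInf_le (bddBelow_set _ _ _) ⟨Matrix.fromBlocks A 0 0 B, posSemidef_blocks hA hB, ?_, ?_⟩
    · rw [gmean_blocks _ hσ₁ hσ₂ hST hA hB]
      have := posSemidef_blocks hA' hB'
      rw [sub_eq_add_neg, Matrix.fromBlocks_neg, Matrix.fromBlocks_add]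
      simpa [sub_eq_add_neg] using this
    · simp [Matrix.trace]
  · have ne : { t : ℝ | ∃ A : Matrix (n₁ ⊕ n₂) (n₁ ⊕ n₂) ℂ, A.PosSemidef ∧
        (Matrix.gmean (1/α) (Matrix.fromBlocks σ₁ 0 0 σ₂) A -
          Matrix.fromBlocks ρ₁ 0 0 ρ₂).PosSemidef ∧ t = A.trace.re }.Nonempty := by
      obtain ⟨A, h, h'⟩ := feasible hα (posSemidef_blocks hρ₁ hρ₂) hST
      exact ⟨_, A, h, h', rfl⟩
    refine le_csInf ne ?_
    rintro _ ⟨A, hA, hA', rfl⟩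
    refine csInf_le ((bddBelow_set _ _ _).add (bddBelow_set _ _ _))
      ⟨_, ⟨A.toBlocks₁₁, toBlocks11_psd hA, ?_, rfl⟩, _,
        ⟨A.toBlocks₂₂, toBlocks22_psd hA, ?_, rfl⟩, ?_⟩
    · have h := (gmean_pinch hβ hσ₁ hσ₂ hST hA).1.add (toBlocks11_psd hA')
      convert h using 1
      ext i j
      simp [Matrix.toBlocks₁₁]
    · have h := (gmean_pinch hβ hσ₁ hσ₂ hST hA).2.add (toBlocks22_psd hA')
      convert h using 1
      ext i j
      simp [Matrix.toBlocks₂₂]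
    · conv_rhs => rw [← Matrix.fromBlocks_toBlocks A]
      simp [Matrix.trace]
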